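/- arXiv:2111.10301 — 2 statements merged into one kernel-verified Lean document; each statement's English description precedes it below -/
import Mathlib

section
/- Let x : [0,1] → ℝ be a continuous function with x(0) = x(1) = 0. Then for every n ∈ ℕ, V_n^{(2)}(x) = 2^{−n} s_n², where s_n := (Σ_{m=0}^{n−1} Σ_{k=0}^{2^m−1} θ_{m,k}²)^{1/2}. -/
/-!
On a dyadic interval of level `n`, let `a` and `b` be the increments of `x` over the left and the
right half. The increment over the whole interval is `a + b`, and the Faber–Schauder coefficient
is `2 ^ (n / 2) * (a - b)`. The parallelogram identity `2 (a² + b²) = (a + b)² + (a - b)²`, summed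
over all intervals of level `n`, therefore says that `2 ^ n * V_n` grows by `∑ k, θ_{n,k}²` when
`n` increases by one; it starts at `V_0 = (x 1 - x 0)²`.
-/

open Filter Finset

noncomputable section

/-- Faber–Schauder coefficient `θ_{m,k}` of `x`. -/
def fsCoeff (x : ℝ → ℝ) (m k : ℕ) : ℝ :=
  2 ^ ((m : ℝ) / 2) *
    (2 * x ((2 * (k : ℝ) + 1) / 2 ^ (m + 1)) - x ((k : ℝ) / 2 ^ m) - x (((k : ℝ) + 1) / 2 ^ m))

/-- `s_n = (∑_{m<n} ∑_{k<2^m} θ_{m,k}²)^{1/2}`. -/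
def sSeq (x : ℝ → ℝ) (n : ℕ) : ℝ :=
  Real.sqrt (∑ m ∈ Finset.range n, ∑ k ∈ Finset.range (2 ^ m), fsCoeff x m k ^ 2)

/-- The `n`-th dyadic `p`-th variation of `x`. -/
def dyadicVar (x : ℝ → ℝ) (p : ℝ) (n : ℕ) : ℝ :=
  ∑ k ∈ Finset.range (2 ^ n), |x (((k : ℝ) + 1) / 2 ^ n) - x ((k : ℝ) / 2 ^ n)| ^ p

theorem sum_range_two_mul {M : Type*} [AddCommMonoid M] (f : ℕ → M) (n : ℕ) :
    ∑ k ∈ range (2 * n), f k = ∑ k ∈ range n, (f (2 * k) + f (2 * k + 1)) := by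
  induction n with
  | zero => simp
  | succ n ih => rw [mul_add_one, sum_range_succ, sum_range_succ, sum_range_succ, ih, add_assoc]

section DyadicIncrement

variable {G : Type*} [AddCommGroup G]

/-- The increment of `x` over the `k`-th dyadic interval `[k / 2 ^ n, (k + 1) / 2 ^ n]` of level
`n`. The two halves of this interval are the intervals `2 * k` and `2 * k + 1` of level `n + 1`. -/
def dyadicIncrement (x : ℝ → G) (n k : ℕ) : G :=
  x (((k : ℝ) + 1) / 2 ^ n) - x ((k : ℝ) / 2 ^ n)

theorem dyadicIncrement_succ_two_mul (x : ℝ → G) (n k : ℕ) :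
    dyadicIncrement x (n + 1) (2 * k) =
      x ((2 * (k : ℝ) + 1) / 2 ^ (n + 1)) - x ((k : ℝ) / 2 ^ n) := by
  have left_endpoint : 2 * (k : ℝ) / 2 ^ (n + 1) = k / 2 ^ n := by
    rw [pow_succ', mul_div_mul_left _ _ two_ne_zero]
  rw [dyadicIncrement, Nat.cast_mul, Nat.cast_ofNat, left_endpoint]

theorem dyadicIncrement_succ_two_mul_add_one (x : ℝ → G) (n k : ℕ) :
    dyadicIncrement x (n + 1) (2 * k + 1) =
      x (((k : ℝ) + 1) / 2 ^ n) - x ((2 * (k : ℝ) + 1) / 2 ^ (n + 1)) := by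
  have right_endpoint : (2 * (k : ℝ) + 1 + 1) / 2 ^ (n + 1) = (k + 1) / 2 ^ n := by
    rw [add_assoc, one_add_one_eq_two, ← mul_add_one, pow_succ', mul_div_mul_left _ _ two_ne_zero]
  rw [dyadicIncrement, Nat.cast_succ, Nat.cast_mul, Nat.cast_ofNat, right_endpoint]

theorem dyadicIncrement_eq_add (x : ℝ → G) (n k : ℕ) :
    dyadicIncrement x n k =
      dyadicIncrement x (n + 1) (2 * k) + dyadicIncrement x (n + 1) (2 * k + 1) := by
  rw [dyadicIncrement_succ_two_mul, dyadicIncrement_succ_two_mul_add_one, dyadicIncrement,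
    sub_add_sub_cancel']

end DyadicIncrement

theorem fsCoeff_eq_mul_dyadicIncrement_sub (x : ℝ → ℝ) (n k : ℕ) :
    fsCoeff x n k = 2 ^ ((n : ℝ) / 2) *
      (dyadicIncrement x (n + 1) (2 * k) - dyadicIncrement x (n + 1) (2 * k + 1)) := by
  rw [dyadicIncrement_succ_two_mul, dyadicIncrement_succ_two_mul_add_one, fsCoeff]
  ring

theorem fsCoeff_sq_eq_mul_dyadicIncrement_sub_sq (x : ℝ → ℝ) (n k : ℕ) :
    fsCoeff x n k ^ 2 = 2 ^ n *
      (dyadicIncrement x (n + 1) (2 * k) - dyadicIncrement x (n + 1) (2 * k + 1)) ^ 2 := by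
  have scale_sq : ((2 : ℝ) ^ ((n : ℝ) / 2)) ^ 2 = 2 ^ n := by
    rw [← Real.rpow_mul_natCast zero_le_two, Nat.cast_ofNat, div_mul_cancel₀ _ two_ne_zero,
      Real.rpow_natCast]
  rw [fsCoeff_eq_mul_dyadicIncrement_sub, mul_pow, scale_sq]

theorem two_pow_succ_mul_dyadicIncrement_sq_add_sq (x : ℝ → ℝ) (n k : ℕ) :
    2 ^ (n + 1) *
        (dyadicIncrement x (n + 1) (2 * k) ^ 2 + dyadicIncrement x (n + 1) (2 * k + 1) ^ 2) =
      2 ^ n * dyadicIncrement x n k ^ 2 + fsCoeff x n k ^ 2 := by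
  rw [fsCoeff_sq_eq_mul_dyadicIncrement_sub_sq, dyadicIncrement_eq_add x n k]
  ring

theorem dyadicVar_two (x : ℝ → ℝ) (n : ℕ) :
    dyadicVar x 2 n = ∑ k ∈ range (2 ^ n), dyadicIncrement x n k ^ 2 := by
  simp only [dyadicVar, dyadicIncrement, Real.rpow_two, sq_abs]

theorem two_pow_succ_mul_dyadicVar_two (x : ℝ → ℝ) (n : ℕ) :
    2 ^ (n + 1) * dyadicVar x 2 (n + 1) =
      2 ^ n * dyadicVar x 2 n + ∑ k ∈ range (2 ^ n), fsCoeff x n k ^ 2 := by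
  simp only [dyadicVar_two, pow_succ' (2 : ℕ) n, sum_range_two_mul, mul_sum, ← sum_add_distrib,
    two_pow_succ_mul_dyadicIncrement_sq_add_sq]

theorem two_pow_mul_dyadicVar_two (x : ℝ → ℝ) (n : ℕ) :
    2 ^ n * dyadicVar x 2 n =
      (x 1 - x 0) ^ 2 + ∑ m ∈ range n, ∑ k ∈ range (2 ^ m), fsCoeff x m k ^ 2 := by
  induction n with
  | zero => simp [dyadicVar_two, dyadicIncrement]
  | succ n ih => rw [two_pow_succ_mul_dyadicVar_two, ih, sum_range_succ, add_assoc]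

theorem sSeq_sq (x : ℝ → ℝ) (n : ℕ) :
    sSeq x n ^ 2 = ∑ m ∈ range n, ∑ k ∈ range (2 ^ m), fsCoeff x m k ^ 2 :=
  Real.sq_sqrt (sum_nonneg fun _ _ => sum_nonneg fun _ _ => sq_nonneg _)

theorem stmt14_general (x : ℝ → ℝ) (n : ℕ) :
    dyadicVar x 2 n = ((x 1 - x 0) ^ 2 + sSeq x n ^ 2) / 2 ^ n := by
  rw [eq_div_iff (by positivity), mul_comm, two_pow_mul_dyadicVar_two, sSeq_sq]

theorem stmt14 (x : ℝ → ℝ) (hx : ContinuousOn x (Set.Icc 0 1))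
    (h0 : x 0 = 0) (h1 : x 1 = 0) (n : ℕ) (hn : 1 ≤ n) :
    dyadicVar x 2 n = sSeq x n ^ 2 / 2 ^ n := by
  simpa [h0, h1] using stmt14_general x n
end
end

section
/- Fix m ∈ ℕ and α_0, …, α_m ≥ 0 with α_0 > 0, and let n > m + 1. Let x : [0,1] → ℝ be a continuous function with s_{n−m−1}(x) > 0, and define: the sequential scale estimate H^s_n(x) := Ĥ_n(λ^s_n x) where λ^s_n is the unique minimizer over λ > 0 of Σ_{k=n−m}^{n} α_{n−k}(Ĥ_k(λx) − Ĥ_{k−1}(λx))²; the terminal scale estimate H^t_n(x) := Ĥ_n(λ^t_n x) where λ^t_n is the unique minimizer over λ > 0 of Σ_{k=n−m}^{n} α_{n−k}(Ĥ_n(λx) − Ĥ_{k−1}(λx))²; and, assuming additionally Σ_{k=0}^m α_k = 1 and α_j > 0 for at least two distinct indices j, the regression scale estimate H^r_n(x) given by the unique minimizer (h, λ) over ℝ × (0,∞) of Σ_{k=0}^{m} α_k((n−k)(Ĥ_{n−k}(x) − h) − log₂ λ)², with H^r_n(x) := h. Then all three estimators are scale-invariant: for every λ ≠ 0, H^s_n(λx)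 = H^s_n(x), H^t_n(λx) = H^t_n(x), and H^r_n(λx) = H^r_n(x). -/
/-!
Two facts give the theorem. First, `Ĥ_k(λ c x) = Ĥ_k(|c| λ x)`, so the objectives for `c x` are
those for `x` after the change of variable `λ ↦ |c| λ`, and this substitution carries minimizers to
minimizers. Second, since `Ĥ_k(λ x) = Ĥ_k(x) - (log₂ λ) / k`, each objective is a linear
least-squares objective in `L = log₂ λ`, respectively in `(h, L)`. By the parallelogram identity the
fitted values of a least-squares problem are unique at every index of positive weight; a single such
index determines `L`, and two of them determine the slope `h`.
-/

open Filter Finset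

noncomputable section

/-- The Gladyshev estimate `Ĥ_n(x) = 1 - (1/n) log₂ s_n(x)`. -/
def Hhat (x : ℝ → ℝ) (n : ℕ) : ℝ := 1 - Real.logb 2 (sSeq x n) / n

/-- The objective function for the sequential scaling factor:
`λ ↦ ∑_{k=n-m}^n α_{n-k} (Ĥ_k(λx) - Ĥ_{k-1}(λx))²`. -/
def seqObj (m : ℕ) (α : ℕ → ℝ) (n : ℕ) (x : ℝ → ℝ) (lam : ℝ) : ℝ :=
  ∑ k ∈ Finset.Icc (n - m) n,
    α (n - k) * (Hhat (fun t => lam * x t) k - Hhat (fun t => lam * x t) (k - 1)) ^ 2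

/-- The objective function for the terminal scaling factor:
`λ ↦ ∑_{k=n-m}^n α_{n-k} (Ĥ_n(λx) - Ĥ_{k-1}(λx))²`. -/
def terObj (m : ℕ) (α : ℕ → ℝ) (n : ℕ) (x : ℝ → ℝ) (lam : ℝ) : ℝ :=
  ∑ k ∈ Finset.Icc (n - m) n,
    α (n - k) * (Hhat (fun t => lam * x t) n - Hhat (fun t => lam * x t) (k - 1)) ^ 2

/-- The objective function for the regression scale estimate:
`(h,λ) ↦ ∑_{k=0}^m α_k ((n-k)(Ĥ_{n-k}(x) - h) - log₂ λ)²`. -/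
def regObj (m : ℕ) (α : ℕ → ℝ) (n : ℕ) (x : ℝ → ℝ) (h lam : ℝ) : ℝ :=
  ∑ k ∈ Finset.range (m + 1),
    α k * (((n : ℝ) - (k : ℝ)) * (Hhat x (n - k) - h) - Real.logb 2 lam) ^ 2

section LeastSquares

variable {ι E : Type*} [AddCommGroup E] [Module ℝ E]

/-- The weighted linear least-squares objective with observations `b i`, weights `w i` and
parameter `p`, whose fitted values are the linear functionals `A i p`. -/
def leastSquaresObj (s : Finset ι) (w b : ι → ℝ) (A : ι → E →ₗ[ℝ] ℝ) (p : E) : ℝ :=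
  ∑ i ∈ s, w i * (b i - A i p) ^ 2

lemma sum_mul_sub_sq_eq_leastSquaresObj (s : Finset ι) (w b : ι → ℝ) (A : ι → E →ₗ[ℝ] ℝ)
    (p q : E) :
    ∑ i ∈ s, w i * (A i p - A i q) ^ 2 =
      2 * leastSquaresObj s w b A p + 2 * leastSquaresObj s w b A q -
        4 * leastSquaresObj s w b A (midpoint ℝ p q) := by
  simp only [leastSquaresObj, mul_sum, ← sum_add_distrib, ← sum_sub_distrib]
  refine sum_congr rfl fun i _ => ?_
  rw [midpoint_eq_smul_add, map_smul, map_add, smul_eq_mul, invOf_eq_inv]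
  ring

lemma fittedValue_eq_of_isMinOn_leastSquaresObj {s : Finset ι} {w b : ι → ℝ}
    {A : ι → E →ₗ[ℝ] ℝ} {K : Set E} (hK : Convex ℝ K) (hw : ∀ i ∈ s, 0 ≤ w i) {p q : E}
    (hpK : p ∈ K) (hqK : q ∈ K) (hp : IsMinOn (leastSquaresObj s w b A) K p)
    (hq : IsMinOn (leastSquaresObj s w b A) K q) {i : ι} (hi : i ∈ s) (hwi : 0 < w i) :
    A i p = A i q := by
  have hmid : midpoint ℝ p q ∈ K := hK.midpoint_mem hpK hqK
  have hnonneg : ∀ j ∈ s, 0 ≤ w j * (A j p - A j q) ^ 2 := fun j hj =>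
    mul_nonneg (hw j hj) (sq_nonneg _)
  have hsum : ∑ j ∈ s, w j * (A j p - A j q) ^ 2 = 0 := by
    refine le_antisymm ?_ (sum_nonneg hnonneg)
    rw [sum_mul_sub_sq_eq_leastSquaresObj s w b]
    linarith [isMinOn_iff.1 hp _ hmid, isMinOn_iff.1 hq _ hmid]
  have hterm := (sum_eq_zero_iff_of_nonneg hnonneg).1 hsum i hi
  exact sub_eq_zero.1 (sq_eq_zero_iff.1 ((mul_eq_zero.1 hterm).resolve_left hwi.ne'))

end LeastSquares

lemma isMinOn_of_eqOn_comp {X Y β : Type*} [Preorder β] {f : X → β} {g : Y → β} {φ : X → Y}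
    {S : Set X} {K : Set Y} {a : X} (hfg : Set.EqOn f (g ∘ φ) S) (hφ : Set.SurjOn φ S K)
    (ha : a ∈ S) (hmin : IsMinOn f S a) : IsMinOn g K (φ a) := by
  refine isMinOn_iff.2 fun y hy => ?_
  obtain ⟨z, hz, rfl⟩ := hφ hy
  simpa only [hfg ha, hfg hz, Function.comp_apply] using isMinOn_iff.1 hmin z hz

lemma surjOn_const_mul_Ioi_zero {a : ℝ} (ha : 0 < a) :
    Set.SurjOn (a * ·) (Set.Ioi 0) (Set.Ioi 0) :=
  (Set.image_const_mul_Ioi_zero ha).ge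

lemma surjOn_logb_two : Set.SurjOn (Real.logb 2) (Set.Ioi 0) Set.univ :=
  Real.surjOn_logb two_pos (by norm_num)

section Gladyshev

variable {x : ℝ → ℝ}

lemma sSeq_const_mul (x : ℝ → ℝ) (a : ℝ) (n : ℕ) :
    sSeq (fun t => a * x t) n = |a| * sSeq x n := by
  have hcoeff : ∀ m k, fsCoeff (fun t => a * x t) m k = a * fsCoeff x m k := fun m k => by
    unfold fsCoeff
    ring
  simp only [sSeq, hcoeff, mul_pow, ← mul_sum]
  rw [Real.sqrt_mul (sq_nonneg a), Real.sqrt_sq_eq_abs]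

lemma sSeq_mono (x : ℝ → ℝ) : Monotone (sSeq x) := fun _ _ hpq =>
  Real.sqrt_le_sqrt <| sum_le_sum_of_subset_of_nonneg (range_mono hpq) fun _ _ _ =>
    sum_nonneg fun _ _ => sq_nonneg _

lemma sSeq_pos_of_le {k l : ℕ} (hk : 0 < sSeq x k) (hkl : k ≤ l) : 0 < sSeq x l :=
  hk.trans_le (sSeq_mono x hkl)

lemma pos_of_sSeq_pos {n : ℕ} (h : 0 < sSeq x n) : 0 < n := by
  rw [Nat.pos_iff_ne_zero]
  rintro rfl
  simp [sSeq] at h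

/-- No absolute value is needed around `a`, since `Real.logb 2 a = Real.logb 2 |a|`. -/
lemma Hhat_const_mul {a : ℝ} {k : ℕ} (ha : a ≠ 0) (hk : 0 < sSeq x k) :
    Hhat (fun t => a * x t) k = Hhat x k - Real.logb 2 a / k := by
  rw [Hhat, Hhat, sSeq_const_mul, Real.logb_mul (abs_ne_zero.2 ha) hk.ne', Real.logb_abs]
  ring

lemma Hhat_const_mul_const_mul (x : ℝ → ℝ) (a c : ℝ) (k : ℕ) :
    Hhat (fun t => a * (c * x t)) k = Hhat (fun t => |c| * a * x t) k := by
  simp only [Hhat, ← mul_assoc, sSeq_const_mul, abs_mul, abs_abs, mul_comm |a|]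

end Gladyshev

section ScaleEstimates

variable {ι : Type*} {s : Finset ι} {w : ι → ℝ} {p q : ι → ℕ} {x : ℝ → ℝ} {c lam lam' : ℝ}

/-- The weighted sum of squared differences `Ĥ_{p i}(λx) - Ĥ_{q i}(λx)`, the common form of the
sequential objective (`p k = k`, `q k = k - 1`) and the terminal one (`p k = n`, `q k = k - 1`). -/
def scaleObj (s : Finset ι) (w : ι → ℝ) (p q : ι → ℕ) (x : ℝ → ℝ) (lam : ℝ) : ℝ :=
  ∑ i ∈ s, w i * (Hhat (fun t => lam * x t) (p i) - Hhat (fun t => lam * x t) (q i)) ^ 2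

lemma scaleObj_const_mul (s : Finset ι) (w : ι → ℝ) (p q : ι → ℕ) (x : ℝ → ℝ) (c lam : ℝ) :
    scaleObj s w p q (fun t => c * x t) lam = scaleObj s w p q x (|c| * lam) := by
  simp only [scaleObj, Hhat_const_mul_const_mul]

lemma isMinOn_scaleObj_abs_mul (hc : c ≠ 0) (hlam : 0 < lam)
    (hmin : IsMinOn (scaleObj s w p q fun t => c * x t) (Set.Ioi 0) lam) :
    IsMinOn (scaleObj s w p q x) (Set.Ioi 0) (|c| * lam) :=
  isMinOn_of_eqOn_comp (fun _ _ => scaleObj_const_mul ..)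
    (surjOn_const_mul_Ioi_zero (abs_pos.2 hc)) hlam hmin

lemma eqOn_scaleObj_leastSquaresObj_comp_logb (hp : ∀ i ∈ s, 0 < sSeq x (p i))
    (hq : ∀ i ∈ s, 0 < sSeq x (q i)) :
    Set.EqOn (scaleObj s w p q x)
      (leastSquaresObj s w (fun i => Hhat x (p i) - Hhat x (q i))
        (fun i => ((p i : ℝ)⁻¹ - (q i : ℝ)⁻¹) • LinearMap.id) ∘ Real.logb 2) (Set.Ioi 0) := by
  refine fun lam (hlam : 0 < lam) => sum_congr rfl fun i hi => ?_
  rw [Hhat_const_mul hlam.ne' (hp i hi), Hhat_const_mul hlam.ne' (hq i hi),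
    LinearMap.smul_apply, LinearMap.id_apply, smul_eq_mul]
  ring

lemma eq_of_isMinOn_scaleObj (hw : ∀ i ∈ s, 0 ≤ w i) (hp : ∀ i ∈ s, 0 < sSeq x (p i))
    (hq : ∀ i ∈ s, 0 < sSeq x (q i)) {i : ι} (hi : i ∈ s) (hwi : 0 < w i) (hpq : p i ≠ q i)
    (hlam : 0 < lam) (hlam' : 0 < lam') (hmin : IsMinOn (scaleObj s w p q x) (Set.Ioi 0) lam)
    (hmin' : IsMinOn (scaleObj s w p q x) (Set.Ioi 0) lam') : lam = lam' := by
  have hlog {μ : ℝ} (hμ : 0 < μ) (h : IsMinOn (scaleObj s w p q x) (Set.Ioi 0) μ) :=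
    isMinOn_of_eqOn_comp (eqOn_scaleObj_leastSquaresObj_comp_logb hp hq) surjOn_logb_two hμ h
  have hfit := fittedValue_eq_of_isMinOn_leastSquaresObj convex_univ hw (Set.mem_univ _)
    (Set.mem_univ _) (hlog hlam hmin) (hlog hlam' hmin') hi hwi
  have hslope : (p i : ℝ)⁻¹ - (q i : ℝ)⁻¹ ≠ 0 :=
    sub_ne_zero.2 <| inv_injective.ne <| Nat.cast_injective.ne hpq
  exact Real.logb_injOn_pos one_lt_two hlam hlam' (mul_left_cancel₀ hslope hfit)

theorem Hhat_eq_of_isMinOn_scaleObj (hw : ∀ i ∈ s, 0 ≤ w i) (hp : ∀ i ∈ s, 0 < sSeq x (p i))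
    (hq : ∀ i ∈ s, 0 < sSeq x (q i)) {i : ι} (hi : i ∈ s) (hwi : 0 < w i) (hpq : p i ≠ q i)
    (hc : c ≠ 0) (hlam : 0 < lam) (hlam' : 0 < lam')
    (hmin : IsMinOn (scaleObj s w p q x) (Set.Ioi 0) lam)
    (hmin' : IsMinOn (scaleObj s w p q fun t => c * x t) (Set.Ioi 0) lam') (n : ℕ) :
    Hhat (fun t => lam * x t) n = Hhat (fun t => lam' * (c * x t)) n := by
  rw [Hhat_const_mul_const_mul, eq_of_isMinOn_scaleObj hw hp hq hi hwi hpq hlam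
    (mul_pos (abs_pos.2 hc) hlam') hmin (isMinOn_scaleObj_abs_mul hc hlam' hmin')]

end ScaleEstimates

section SequentialAndTerminalEstimates

variable {m n i : ℕ} {α : ℕ → ℝ} {x : ℝ → ℝ} {c lam lam' : ℝ}

theorem Hhat_eq_of_isMinOn_seqObj (hs : 0 < sSeq x (n - m - 1)) (hα : ∀ k ≤ m, 0 ≤ α k)
    (hi : i ≤ m) (hαi : 0 < α i) (hc : c ≠ 0) (hlam : 0 < lam) (hlam' : 0 < lam')
    (hmin : IsMinOn (seqObj m α n x) (Set.Ioi 0) lam)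
    (hmin' : IsMinOn (seqObj m α n fun t => c * x t) (Set.Ioi 0) lam') (N : ℕ) :
    Hhat (fun t => lam * x t) N = Hhat (fun t => lam' * (c * x t)) N := by
  have hnm : 0 < n - m - 1 := pos_of_sSeq_pos hs
  refine Hhat_eq_of_isMinOn_scaleObj (s := Icc (n - m) n) (w := fun k => α (n - k)) (p := id)
    (q := (· - 1)) (i := n - i) (fun k hk => hα _ ?_) (fun k hk => sSeq_pos_of_le hs ?_)
    (fun k hk => sSeq_pos_of_le hs ?_) ?_ ?_ ?_ hc hlam hlam' hmin hmin' N
  all_goals grind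

theorem Hhat_eq_of_isMinOn_terObj (hs : 0 < sSeq x (n - m - 1)) (hα : ∀ k ≤ m, 0 ≤ α k)
    (hi : i ≤ m) (hαi : 0 < α i) (hc : c ≠ 0) (hlam : 0 < lam) (hlam' : 0 < lam')
    (hmin : IsMinOn (terObj m α n x) (Set.Ioi 0) lam)
    (hmin' : IsMinOn (terObj m α n fun t => c * x t) (Set.Ioi 0) lam') (N : ℕ) :
    Hhat (fun t => lam * x t) N = Hhat (fun t => lam' * (c * x t)) N := by
  have hnm : 0 < n - m - 1 := pos_of_sSeq_pos hs
  refine Hhat_eq_of_isMinOn_scaleObj (s := Icc (n - m) n) (w := fun k => α (n - k))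
    (p := fun _ => n) (q := (· - 1)) (i := n - i) (fun k hk => hα _ ?_)
    (fun _ _ => sSeq_pos_of_le hs ?_) (fun k hk => sSeq_pos_of_le hs ?_) ?_ ?_ ?_ hc hlam hlam'
    hmin hmin' N
  all_goals grind

end SequentialAndTerminalEstimates

section RegressionEstimate

variable {m n : ℕ} {α : ℕ → ℝ} {x : ℝ → ℝ} {c : ℝ} {p q : ℝ × ℝ}

lemma regObj_const_mul (hs : 0 < sSeq x (n - m)) (hc : c ≠ 0) (h : ℝ) {lam : ℝ}
    (hlam : lam ≠ 0) :
    regObj m α n (fun t => c * x t) h lam = regObj m α n x h (|c| * lam) := by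
  have hmn : m < n := Nat.sub_pos_iff_lt.1 (pos_of_sSeq_pos hs)
  refine sum_congr rfl fun k hk => ?_
  have hkm : k ≤ m := mem_range_succ_iff.1 hk
  have hkn : (n : ℝ) - k ≠ 0 := sub_ne_zero.2 <| Nat.cast_injective.ne (by lia)
  rw [Hhat_const_mul hc (sSeq_pos_of_le hs (by lia)), Nat.cast_sub (by lia),
    Real.logb_mul (abs_ne_zero.2 hc) hlam, Real.logb_abs]
  field_simp
  ring

lemma isMinOn_regObj_abs_mul (hs : 0 < sSeq x (n - m)) (hc : c ≠ 0) (hp : 0 < p.2)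
    (hmin : IsMinOn (Function.uncurry (regObj m α n fun t => c * x t))
      (Set.univ ×ˢ Set.Ioi 0) p) :
    IsMinOn (Function.uncurry (regObj m α n x)) (Set.univ ×ˢ Set.Ioi 0) (p.1, |c| * p.2) :=
  isMinOn_of_eqOn_comp (φ := Prod.map id (|c| * ·))
    (fun r hr => regObj_const_mul hs hc r.1 (ne_of_gt hr.2))
    ((Set.surjOn_id _).prodMap (surjOn_const_mul_Ioi_zero (abs_pos.2 hc))) ⟨trivial, hp⟩ hmin

lemma uncurry_regObj_eq_leastSquaresObj_comp_logb (m : ℕ) (α : ℕ → ℝ) (n : ℕ) (x : ℝ → ℝ) :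
    Function.uncurry (regObj m α n x) =
      leastSquaresObj (range (m + 1)) α (fun k => ((n : ℝ) - k) * Hhat x (n - k))
        (fun k => ((n : ℝ) - k) • LinearMap.fst ℝ ℝ ℝ + LinearMap.snd ℝ ℝ ℝ) ∘
          Prod.map id (Real.logb 2) := by
  ext ⟨h, lam⟩
  simp only [Function.uncurry_apply_pair, Function.comp_apply, Prod.map_apply, id_eq, regObj,
    leastSquaresObj, LinearMap.add_apply, LinearMap.smul_apply, LinearMap.fst_apply,
    LinearMap.snd_apply, smul_eq_mul]
  exact sum_congr rfl fun k _ => by ring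

lemma fst_eq_of_isMinOn_regObj (hα : ∀ k ≤ m, 0 ≤ α k) {i j : ℕ} (hi : i ≤ m) (hj : j ≤ m)
    (hij : i ≠ j) (hαi : 0 < α i) (hαj : 0 < α j) (hp : 0 < p.2) (hq : 0 < q.2)
    (hpmin : IsMinOn (Function.uncurry (regObj m α n x)) (Set.univ ×ˢ Set.Ioi 0) p)
    (hqmin : IsMinOn (Function.uncurry (regObj m α n x)) (Set.univ ×ˢ Set.Ioi 0) q) :
    p.1 = q.1 := by
  have hlog {r : ℝ × ℝ} (hr : 0 < r.2)
      (h : IsMinOn (Function.uncurry (regObj m α n x)) (Set.univ ×ˢ Set.Ioi 0) r) :=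
    isMinOn_of_eqOn_comp
      (fun _ _ => congrFun (uncurry_regObj_eq_leastSquaresObj_comp_logb m α n x) _)
      ((Set.surjOn_id _).prodMap surjOn_logb_two) (Set.mk_mem_prod (Set.mem_univ _) hr) h
  have hfit {k : ℕ} (hk : k ≤ m) (hαk : 0 < α k) :
      ((n : ℝ) - k) * p.1 + Real.logb 2 p.2 = ((n : ℝ) - k) * q.1 + Real.logb 2 q.2 :=
    fittedValue_eq_of_isMinOn_leastSquaresObj (convex_univ.prod convex_univ)
      (fun l hl => hα l (mem_range_succ_iff.1 hl)) (by simp) (by simp)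
      (hlog hp hpmin) (hlog hq hqmin) (mem_range_succ_iff.2 hk) hαk
  have hdiff : ((i : ℝ) - j) * p.1 = ((i : ℝ) - j) * q.1 := by
    linear_combination hfit hj hαj - hfit hi hαi
  exact mul_left_cancel₀ (sub_ne_zero.2 <| Nat.cast_injective.ne hij) hdiff

theorem fst_eq_of_isMinOn_regObj_const_mul (hs : 0 < sSeq x (n - m)) (hα : ∀ k ≤ m, 0 ≤ α k)
    {i j : ℕ} (hi : i ≤ m) (hj : j ≤ m) (hij : i ≠ j) (hαi : 0 < α i) (hαj : 0 < α j)
    (hc : c ≠ 0) (hp : 0 < p.2) (hq : 0 < q.2)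
    (hpmin : IsMinOn (Function.uncurry (regObj m α n x)) (Set.univ ×ˢ Set.Ioi 0) p)
    (hqmin : IsMinOn (Function.uncurry (regObj m α n fun t => c * x t))
      (Set.univ ×ˢ Set.Ioi 0) q) :
    p.1 = q.1 :=
  fst_eq_of_isMinOn_regObj (q := (q.1, |c| * q.2)) hα hi hj hij hαi hαj hp
    (mul_pos (abs_pos.2 hc) hq) hpmin (isMinOn_regObj_abs_mul hs hc hq hqmin)

end RegressionEstimate

theorem stmt18_general (m : ℕ) (α : ℕ → ℝ) (hα : ∀ k : ℕ, k ≤ m → 0 ≤ α k)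
    (htwo : ∃ i j : ℕ, i ≤ m ∧ j ≤ m ∧ i ≠ j ∧ 0 < α i ∧ 0 < α j)
    (n : ℕ) (x : ℝ → ℝ) (hs : 0 < sSeq x (n - m - 1)) (c : ℝ) (hc : c ≠ 0)
    (lamS lamS' lamT lamT' : ℝ) (hR hR' lamR lamR' : ℝ)
    (hSmin : 0 < lamS ∧ ∀ μ : ℝ, 0 < μ → seqObj m α n x lamS ≤ seqObj m α n x μ)
    (hSmin' : 0 < lamS' ∧ ∀ μ : ℝ, 0 < μ →
      seqObj m α n (fun t => c * x t) lamS' ≤ seqObj m α n (fun t => c * x t) μ)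
    (hTmin : 0 < lamT ∧ ∀ μ : ℝ, 0 < μ → terObj m α n x lamT ≤ terObj m α n x μ)
    (hTmin' : 0 < lamT' ∧ ∀ μ : ℝ, 0 < μ →
      terObj m α n (fun t => c * x t) lamT' ≤ terObj m α n (fun t => c * x t) μ)
    (hRmin : 0 < lamR ∧ ∀ h μ : ℝ, 0 < μ → regObj m α n x hR lamR ≤ regObj m α n x h μ)
    (hRmin' : 0 < lamR' ∧ ∀ h μ : ℝ, 0 < μ →
      regObj m α n (fun t => c * x t) hR' lamR' ≤ regObj m α n (fun t => c * x t) h μ) :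
    Hhat (fun t => lamS * x t) n = Hhat (fun t => lamS' * (c * x t)) n ∧
    Hhat (fun t => lamT * x t) n = Hhat (fun t => lamT' * (c * x t)) n ∧
    hR = hR' := by
  obtain ⟨i, j, hi, hj, hij, hαi, hαj⟩ := htwo
  refine ⟨Hhat_eq_of_isMinOn_seqObj hs hα hi hαi hc hSmin.1 hSmin'.1 hSmin.2 hSmin'.2 n,
    Hhat_eq_of_isMinOn_terObj hs hα hi hαi hc hTmin.1 hTmin'.1 hTmin.2 hTmin'.2 n, ?_⟩
  exact fst_eq_of_isMinOn_regObj_const_mul (p := (hR, lamR)) (q := (hR', lamR'))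
    (sSeq_pos_of_le hs (Nat.sub_le _ _)) hα hi hj hij hαi hαj hc hRmin.1 hRmin'.1
    (fun r hr => hRmin.2 r.1 r.2 hr.2) (fun r hr => hRmin'.2 r.1 r.2 hr.2)

theorem stmt18 (m : ℕ) (α : ℕ → ℝ) (hα : ∀ k : ℕ, k ≤ m → 0 ≤ α k) (hα0 : 0 < α 0)
    (hsum : ∑ k ∈ Finset.range (m + 1), α k = 1)
    (htwo : ∃ i j : ℕ, i ≤ m ∧ j ≤ m ∧ i ≠ j ∧ 0 < α i ∧ 0 < α j)
    (n : ℕ) (hn : m + 1 < n)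
    (x : ℝ → ℝ) (hx : ContinuousOn x (Set.Icc 0 1))
    (hs : 0 < sSeq x (n - m - 1))
    (c : ℝ) (hc : c ≠ 0)
    (lamS lamS' lamT lamT' : ℝ) (hR hR' lamR lamR' : ℝ)
    (hSmin : 0 < lamS ∧ ∀ μ : ℝ, 0 < μ → seqObj m α n x lamS ≤ seqObj m α n x μ)
    (hSmin' : 0 < lamS' ∧ ∀ μ : ℝ, 0 < μ →
      seqObj m α n (fun t => c * x t) lamS' ≤ seqObj m α n (fun t => c * x t) μ)
    (hTmin : 0 < lamT ∧ ∀ μ : ℝ, 0 < μ → terObj m α n x lamT ≤ terObj m α n x μ)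
    (hTmin' : 0 < lamT' ∧ ∀ μ : ℝ, 0 < μ →
      terObj m α n (fun t => c * x t) lamT' ≤ terObj m α n (fun t => c * x t) μ)
    (hRmin : 0 < lamR ∧ ∀ h μ : ℝ, 0 < μ → regObj m α n x hR lamR ≤ regObj m α n x h μ)
    (hRmin' : 0 < lamR' ∧ ∀ h μ : ℝ, 0 < μ →
      regObj m α n (fun t => c * x t) hR' lamR' ≤ regObj m α n (fun t => c * x t) h μ) :
    Hhat (fun t => lamS * x t) n = Hhat (fun t => lamS' * (c * x t)) n ∧
    Hhat (fun t => lamT * x t) n = Hhat (fun t => lamT' * (c * x t)) n ∧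
    hR = hR' :=
  stmt18_general m α hα htwo n x hs c hc lamS lamS' lamT lamT' hR hR' lamR lamR'
    hSmin hSmin' hTmin hTmin' hRmin hRmin'
end
end
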